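/- Let C : C([−τ,0];ℝⁿ) → ℝʳ be any bounded linear operator. Then there exists a constant M_C > 0 such that for all T > 0, all p ≥ 1, and every continuous function x : [−τ,T] → ℝⁿ one has (∫₀ᵀ |C(x_t)|^p dt)^{1/p} ≤ M_C · ( ∫_{−τ}^0 |x(t)|^p dt + ∫₀ᵀ |x(t)|^p dt )^{1/p}, where x_t ∈ C([−τ,0];ℝⁿ) denotes the history segment x_t(θ) := x(t+θ) for θ ∈ [−τ,0]. -/

import Mathlib

/-!
For a functional `φ` on `C(K, E)`, the `Lᵖ` norm of `u = φ ∘ g` is controlled by duality. With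
`h = |u| ^ (p - 2) u`, integrating and pulling `φ` out of the Bochner integral gives
`∫ |u| ^ p = φ (∫ h • g) ≤ ‖φ‖ sup_θ ∫ |h| ‖g θ‖`, and Hölder's inequality bounds each of these
integrals by `‖u‖_p ^ (p - 1) ‖g θ‖_p`; dividing leaves `‖u‖_p ≤ ‖φ‖ sup_θ ‖g θ‖_p`.
Operators into a finite-dimensional space are handled coordinatewise. For `g t = x_t`, each
`t ↦ x_t θ` is a translate of `x`, so its `Lᵖ` norm on `(0, T]` is at most that of `x` on `(-τ, T]`.
-/

open MeasureTheory

noncomputable section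

namespace DelaySeg

variable {n : ℕ}

/-- The history segment `x_t ∈ C([-τ, 0]; ℝⁿ)`, `x_t(θ) = x(t + θ)`, of a continuous
function `x : ℝ → ℝⁿ`. -/
def seg (τ : ℝ) (x : ℝ → (Fin n → ℝ)) (hx : Continuous x) (t : ℝ) :
    C(Set.Icc (-τ) (0:ℝ), Fin n → ℝ) :=
  ⟨fun θ => x (t + θ), hx.comp (continuous_const.add continuous_subtype_val)⟩

open scoped ENNReal NNReal

/-- The duality map of `Lᵖ` for real scalars, `a ↦ |a| ^ (p - 2) a`. Its value at `a = 0` is `0`,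
also when `p ≤ 2`. -/
def dualityMap (p a : ℝ) : ℝ :=
  |a| ^ (p - 2) * a

lemma dualityMap_mul_self {p : ℝ} (hp : p ≠ 0) (a : ℝ) : dualityMap p a * a = |a| ^ p := by
  rcases eq_or_ne a 0 with rfl | ha
  · simp [Real.zero_rpow hp]
  · rw [dualityMap, mul_assoc, ← abs_mul_abs_self, ← sq, ← Real.rpow_natCast,
      ← Real.rpow_add (abs_pos.2 ha)]
    norm_num

lemma enorm_dualityMap_le (p a : ℝ) : ‖dualityMap p a‖ₑ ≤ ‖a‖ₑ ^ (p - 1) := by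
  rcases eq_or_ne a 0 with rfl | ha
  · simp [dualityMap]
  · have ha' : 0 < |a| := abs_pos.2 ha
    refine le_of_eq ?_
    rw [Real.enorm_eq_ofReal_abs, Real.enorm_eq_ofReal_abs, ENNReal.ofReal_rpow_of_pos ha',
      dualityMap, abs_mul, abs_of_nonneg (by positivity), ← Real.rpow_add_one ha'.ne']
    ring_nf

lemma measurable_dualityMap (p : ℝ) : Measurable (dualityMap p) := by
  unfold dualityMap
  fun_prop

lemma le_of_rpow_le_rpow_sub_one_mul {a b : ℝ≥0∞} {p : ℝ} (ha : a ≠ ∞)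
    (h : a ^ p ≤ a ^ (p - 1) * b) : a ≤ b := by
  rcases eq_or_ne a 0 with rfl | ha₀
  · exact zero_le
  · rw [← sub_add_cancel p 1, ENNReal.rpow_add _ _ ha₀ ha, ENNReal.rpow_one,
      add_sub_cancel_right] at h
    exact (ENNReal.mul_le_mul_iff_right (ENNReal.rpow_pos (pos_iff_ne_zero.2 ha₀) ha).ne'
      (ENNReal.rpow_ne_top_of_ne_zero ha₀ ha)).1 h

section LpDuality

variable {α : Type*} [MeasurableSpace α] {μ : Measure α} {p : ℝ≥0}

lemma lintegral_enorm_rpow_sub_one_mul_enorm_le {E F : Type*} [NormedAddCommGroup E]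
    [NormedAddCommGroup F] (hp : 1 ≤ p) {f : α → E} {g : α → F}
    (hf : AEStronglyMeasurable f μ) (hg : AEStronglyMeasurable g μ) :
    ∫⁻ t, ‖f t‖ₑ ^ (p - 1 : ℝ) * ‖g t‖ₑ ∂μ ≤ eLpNorm f p μ ^ (p - 1 : ℝ) * eLpNorm g p μ := by
  have hp₀ : p ≠ 0 := (zero_lt_one.trans_le hp).ne'
  have hp₁ : (1 : ℝ) ≤ p := hp
  have hmul : (p : ℝ) * (1 - 1 / p) = p - 1 := by field_simp
  have hmul' : (p : ℝ) * (1 / p) = 1 := by field_simp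
  have holder := ENNReal.lintegral_mul_norm_pow_le (hf.enorm.pow_const (p : ℝ))
    (hg.enorm.pow_const (p : ℝ)) (p := 1 - 1 / p) (q := 1 / p)
    (sub_nonneg.2 (div_le_one_of_le₀ hp₁ (by positivity))) (by positivity) (sub_add_cancel _ _)
  simpa only [← eLpNorm_nnreal_pow_eq_lintegral hp₀, ← ENNReal.rpow_mul, hmul, hmul',
    ENNReal.rpow_one] using holder

lemma lintegral_enorm_dualityMap_mul_enorm_le {E : Type*} [NormedAddCommGroup E] (hp : 1 ≤ p)
    {u : α → ℝ} {g : α → E} (hu : AEStronglyMeasurable u μ) (hg : AEStronglyMeasurable g μ) :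
    ∫⁻ t, ‖dualityMap p (u t)‖ₑ * ‖g t‖ₑ ∂μ ≤
      eLpNorm u p μ ^ (p - 1 : ℝ) * eLpNorm g p μ :=
  (lintegral_mono fun t => mul_le_mul_left (enorm_dualityMap_le p (u t)) _).trans
    (lintegral_enorm_rpow_sub_one_mul_enorm_le hp hu hg)

lemma integrable_dualityMap_smul {E : Type*} [NormedAddCommGroup E] [NormedSpace ℝ E]
    (hp : 1 ≤ p) {u : α → ℝ} {g : α → E} (hu : MemLp u p μ) (hg : MemLp g p μ) :
    Integrable (fun t => dualityMap p (u t) • g t) μ := by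
  refine ⟨((measurable_dualityMap p).comp_aemeasurable hu.1.aemeasurable).aestronglyMeasurable.smul
    hg.1, ?_⟩
  simp only [HasFiniteIntegral, enorm_smul]
  refine (lintegral_enorm_dualityMap_mul_enorm_le hp hu.1 hg.1).trans_lt
    (ENNReal.mul_lt_top (ENNReal.rpow_lt_top_of_nonneg ?_ hu.2.ne) hg.2)
  exact sub_nonneg.2 hp

lemma eLpNorm_rpow_eq_enorm_integral_dualityMap_mul (hp : p ≠ 0) {u : α → ℝ}
    (hu : MemLp u p μ) :
    eLpNorm u p μ ^ (p : ℝ) = ‖∫ t, dualityMap p (u t) * u t ∂μ‖ₑ := by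
  have hint : Integrable (fun t => |u t| ^ (p : ℝ)) μ :=
    hu.integrable_norm_rpow (by exact_mod_cast hp) ENNReal.coe_ne_top
  simp only [dualityMap_mul_self (NNReal.coe_ne_zero.2 hp)]
  rw [eLpNorm_nnreal_pow_eq_lintegral hp, Real.enorm_of_nonneg (by positivity),
    ofReal_integral_eq_lintegral_ofReal hint (.of_forall fun t => by positivity)]
  simp only [Real.enorm_eq_ofReal_abs, ENNReal.ofReal_rpow_of_nonneg (abs_nonneg _) p.coe_nonneg]

end LpDuality

section ContinuousMapValued

variable {α K E : Type*} [MeasurableSpace α] {μ : Measure α} [TopologicalSpace K] [CompactSpace K]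
  [NormedAddCommGroup E] [NormedSpace ℝ E] [CompleteSpace E]

lemma enorm_integral_le_iSup_lintegral_enorm {f : α → C(K, E)} (hf : Integrable f μ) :
    ‖∫ t, f t ∂μ‖ₑ ≤ ⨆ θ, ∫⁻ t, ‖f t θ‖ₑ ∂μ := by
  rw [ContinuousMap.enorm_eq_iSup_enorm]
  refine iSup_mono fun θ => ?_
  rw [ContinuousMap.integral_apply hf]
  exact enorm_integral_le_lintegral_enorm _

variable {p : ℝ≥0} {g : α → C(K, E)}

theorem eLpNorm_functional_comp_le_iSup (φ : C(K, E) →L[ℝ] ℝ) (hp : 1 ≤ p) (hg : MemLp g p μ) :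
    eLpNorm (fun t => φ (g t)) p μ ≤ ‖φ‖ₑ * ⨆ θ, eLpNorm (fun t => g t θ) p μ := by
  set u : α → ℝ := fun t => φ (g t)
  have hu : MemLp u p μ := φ.comp_memLp' hg
  have hint := integrable_dualityMap_smul hp hu hg
  have hg_apply (θ : K) : AEStronglyMeasurable (fun t => g t θ) μ :=
    (continuous_eval_const θ).comp_aestronglyMeasurable hg.1
  have hpull : ∫ t, dualityMap p (u t) * u t ∂μ = φ (∫ t, dualityMap p (u t) • g t ∂μ) := by
    simp only [← φ.integral_comp_comm hint, map_smul, smul_eq_mul, u]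
  refine le_of_rpow_le_rpow_sub_one_mul (p := p) hu.2.ne ?_
  calc eLpNorm u p μ ^ (p : ℝ)
    _ = ‖φ (∫ t, dualityMap p (u t) • g t ∂μ)‖ₑ := by
        rw [eLpNorm_rpow_eq_enorm_integral_dualityMap_mul (zero_lt_one.trans_le hp).ne' hu, hpull]
    _ ≤ ‖φ‖ₑ * ‖∫ t, dualityMap p (u t) • g t ∂μ‖ₑ := φ.le_opENorm _
    _ ≤ ‖φ‖ₑ * ⨆ θ, ∫⁻ t, ‖dualityMap p (u t)‖ₑ * ‖g t θ‖ₑ ∂μ := by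
        gcongr
        simpa only [ContinuousMap.smul_apply, enorm_smul] using
          enorm_integral_le_iSup_lintegral_enorm hint
    _ ≤ ‖φ‖ₑ * ⨆ θ, eLpNorm u p μ ^ (p - 1 : ℝ) * eLpNorm (fun t => g t θ) p μ := by
        gcongr with θ
        exact lintegral_enorm_dualityMap_mul_enorm_le hp hu.1 (hg_apply θ)
    _ = eLpNorm u p μ ^ (p - 1 : ℝ) * (‖φ‖ₑ * ⨆ θ, eLpNorm (fun t => g t θ) p μ) := by
        rw [← ENNReal.mul_iSup, mul_left_comm]

theorem eLpNorm_clm_comp_le_iSup {ι F : Type*} [Fintype ι] [NormedAddCommGroup F]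
    [NormedSpace ℝ F] [FiniteDimensional ℝ F] (b : Module.Basis ι ℝ F) (C : C(K, E) →L[ℝ] F)
    (hp : 1 ≤ p) (hg : MemLp g p μ) :
    eLpNorm (fun t => C (g t)) p μ ≤
      (∑ i, ‖b i‖ₑ * ‖(b.coord i).toContinuousLinearMap ∘L C‖ₑ) *
        ⨆ θ, eLpNorm (fun t => g t θ) p μ := by
  set φ : ι → C(K, E) →L[ℝ] ℝ := fun i => (b.coord i).toContinuousLinearMap ∘L C
  have hcoord : (fun t => C (g t)) = ∑ i, fun t => φ i (g t) • b i := by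
    ext t
    simp [φ, b.sum_repr]
  have hmeas (i : ι) : AEStronglyMeasurable (fun t => φ i (g t) • b i) μ :=
    ((φ i).continuous.comp_aestronglyMeasurable hg.1).smul_const (b i)
  rw [hcoord, Finset.sum_mul]
  refine (eLpNorm_sum_le (fun i _ => hmeas i) (by exact_mod_cast hp)).trans
    (Finset.sum_le_sum fun i _ => ?_)
  calc eLpNorm (fun t => φ i (g t) • b i) p μ
    _ ≤ ‖b i‖ₑ * eLpNorm (fun t => φ i (g t)) p μ :=
        eLpNorm_le_mul_eLpNorm_of_ae_le_mul' (.of_forall fun t => by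
          rw [enorm_smul, mul_comm, enorm_eq_nnnorm (b i)]) _
    _ ≤ ‖b i‖ₑ * (‖φ i‖ₑ * ⨆ θ, eLpNorm (fun t => g t θ) p μ) := by
        gcongr
        exact eLpNorm_functional_comp_le_iSup (φ i) hp hg
    _ = _ := (mul_assoc _ _ _).symm

end ContinuousMapValued

section History

variable {E : Type*} [NormedAddCommGroup E]

/-- The history segment `x_t ∈ C([-τ, 0]; E)`, `x_t(θ) = x(t + θ)`, of a continuous function with
values in an arbitrary normed group; it extends `seg` from `E = ℝⁿ`, with `x` bundled. -/
def history (τ : ℝ) (x : C(ℝ, E)) (t : ℝ) : C(Set.Icc (-τ) (0 : ℝ), E) :=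
  ⟨fun θ => x (t + θ), by fun_prop⟩

lemma continuous_history (τ : ℝ) (x : C(ℝ, E)) : Continuous (history τ x) :=
  ContinuousMap.continuous_of_continuous_uncurry _ <|
    show Continuous fun q : ℝ × Set.Icc (-τ) (0 : ℝ) => x (q.1 + q.2) by fun_prop

lemma memLp_restrict_Ioc_of_continuous {f : ℝ → E} (hf : Continuous f) (p : ℝ≥0∞) (a b : ℝ) :
    MemLp f p (volume.restrict (Set.Ioc a b)) := by
  obtain ⟨c, hc⟩ := isCompact_Icc.exists_bound_of_continuousOn (s := Set.Icc a b) hf.continuousOn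
  exact .of_bound hf.aestronglyMeasurable c <|
    ae_restrict_of_forall_mem measurableSet_Ioc fun t ht => hc t (Set.Ioc_subset_Icc_self ht)

lemma eLpNorm_history_apply_le {τ : ℝ} (x : C(ℝ, E)) (θ : Set.Icc (-τ) (0 : ℝ)) (p : ℝ≥0∞)
    (T : ℝ) :
    eLpNorm (fun t => history τ x t θ) p (volume.restrict (Set.Ioc 0 T)) ≤
      eLpNorm x p (volume.restrict (Set.Ioc (-τ) T)) := by
  obtain ⟨θ, hθ, hθ₀⟩ := θ
  have hshift : MeasurePreserving (· + θ) (volume.restrict (Set.Ioc 0 T))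
      (volume.restrict (Set.Ioc θ (T + θ))) := by
    simpa using (measurePreserving_add_right volume θ).restrict_preimage
      (measurableSet_Ioc (a := θ) (b := T + θ))
  calc eLpNorm (fun t => x (t + θ)) p (volume.restrict (Set.Ioc 0 T))
    _ = eLpNorm x p (volume.restrict (Set.Ioc θ (T + θ))) :=
        eLpNorm_comp_measurePreserving x.continuous.aestronglyMeasurable hshift
    _ ≤ eLpNorm x p (volume.restrict (Set.Ioc (-τ) T)) :=
        eLpNorm_mono_measure _ <|
          Measure.restrict_mono (Set.Ioc_subset_Ioc hθ (by linarith)) le_rfl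

lemma lpNorm_restrict_Ioc_eq_add {p : ℝ≥0} (hp : p ≠ 0) (x : C(ℝ, E)) {a b c : ℝ} (hab : a ≤ b)
    (hbc : b ≤ c) :
    lpNorm x p (volume.restrict (Set.Ioc a c)) =
      ((∫ t in Set.Ioc a b, ‖x t‖ ^ (p : ℝ)) + ∫ t in Set.Ioc b c, ‖x t‖ ^ (p : ℝ)) ^
        (p⁻¹ : ℝ) := by
  have hint (s t : ℝ) : IntegrableOn (fun t => ‖x t‖ ^ (p : ℝ)) (Set.Ioc s t) :=
    (memLp_restrict_Ioc_of_continuous x.continuous p s t).integrable_norm_rpow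
      (by exact_mod_cast hp) ENNReal.coe_ne_top
  rw [lpNorm_nnreal_eq_integral_norm_rpow hp x.continuous.aestronglyMeasurable,
    ← Set.Ioc_union_Ioc_eq_Ioc hab hbc, setIntegral_union
      (Set.Ioc_disjoint_Ioc_of_le le_rfl) measurableSet_Ioc (hint a b) (hint b c)]

variable [NormedSpace ℝ E] [CompleteSpace E] {F : Type*} [NormedAddCommGroup F] [NormedSpace ℝ F]
  [FiniteDimensional ℝ F]

theorem exists_lpNorm_clm_history_le {τ : ℝ} (C : C(Set.Icc (-τ) (0 : ℝ), E) →L[ℝ] F) :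
    ∃ M > (0 : ℝ), ∀ (T : ℝ) (p : ℝ≥0), 1 ≤ p → ∀ x : C(ℝ, E),
      lpNorm (fun t => C (history τ x t)) p (volume.restrict (Set.Ioc 0 T)) ≤
        M * lpNorm x p (volume.restrict (Set.Ioc (-τ) T)) := by
  let b := Module.finBasis ℝ F
  let N : ℝ≥0 := ∑ i, ‖b i‖₊ * ‖(b.coord i).toContinuousLinearMap ∘L C‖₊
  refine ⟨N + 1, by positivity, fun T p hp x => ?_⟩
  have hhist := memLp_restrict_Ioc_of_continuous (continuous_history τ x) p 0 T
  have hC : MemLp (fun t => C (history τ x t)) p _ := C.comp_memLp' hhist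
  have hx := memLp_restrict_Ioc_of_continuous x.continuous p (-τ) T
  have hle : eLpNorm (fun t => C (history τ x t)) p (volume.restrict (Set.Ioc 0 T)) ≤
      N * eLpNorm x p (volume.restrict (Set.Ioc (-τ) T)) := by
    refine (eLpNorm_clm_comp_le_iSup b C hp hhist).trans ?_
    push_cast [N]
    exact mul_le_mul_right (iSup_le fun θ => eLpNorm_history_apply_le x θ p T) _
  calc lpNorm (fun t => C (history τ x t)) p (volume.restrict (Set.Ioc 0 T))
    _ ≤ N * lpNorm x p (volume.restrict (Set.Ioc (-τ) T)) := by
        rw [← toReal_eLpNorm hC.1, ← toReal_eLpNorm hx.1,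
          ← ENNReal.coe_toReal, ← ENNReal.toReal_mul]
        exact ENNReal.toReal_mono (ENNReal.mul_ne_top ENNReal.coe_ne_top hx.2.ne) hle
    _ ≤ (N + 1) * lpNorm x p (volume.restrict (Set.Ioc (-τ) T)) := by
        gcongr
        · exact lpNorm_nonneg
        · simp

theorem statement14_general {τ : ℝ} (hτ : 0 ≤ τ) (C : C(Set.Icc (-τ) (0 : ℝ), E) →L[ℝ] F) :
    ∃ M > (0 : ℝ), ∀ T, 0 ≤ T → ∀ p : ℝ, 1 ≤ p → ∀ x : C(ℝ, E),
      (∫ t in Set.Ioc (0 : ℝ) T, ‖C (history τ x t)‖ ^ p) ^ (1 / p) ≤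
        M * ((∫ t in Set.Ioc (-τ) (0 : ℝ), ‖x t‖ ^ p) +
          ∫ t in Set.Ioc (0 : ℝ) T, ‖x t‖ ^ p) ^ (1 / p) := by
  obtain ⟨M, hM, hle⟩ := exists_lpNorm_clm_history_le C
  refine ⟨M, hM, fun T hT p hp x => ?_⟩
  lift p to ℝ≥0 using zero_le_one.trans hp
  replace hp : 1 ≤ p := hp
  have hp₀ : p ≠ 0 := (zero_lt_one.trans_le hp).ne'
  have hC : Continuous fun t => C (history τ x t) := C.continuous.comp (continuous_history τ x)
  rw [one_div, ← lpNorm_restrict_Ioc_eq_add hp₀ x (neg_nonpos.2 hτ) hT,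
    ← lpNorm_nnreal_eq_integral_norm_rpow hp₀ hC.aestronglyMeasurable]
  exact hle T p hp x

end History

/-- Lemma 5.3 of the paper: for every bounded linear operator
`C : C([-τ, 0]; ℝⁿ) → ℝʳ` there is a constant `M_C > 0` such that for all `T > 0`,
all `p ≥ 1` and every continuous `x : ℝ → ℝⁿ`,
`(∫₀ᵀ |C x_t|^p dt)^{1/p} ≤ M_C (∫_{-τ}^0 |x|^p dt + ∫₀ᵀ |x|^p dt)^{1/p}`. -/
theorem statement14 (τ : ℝ) (hτ : 0 < τ) (n r : ℕ)
    (C : C(Set.Icc (-τ) (0:ℝ), Fin n → ℝ) →L[ℝ] (Fin r → ℝ)) :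
    ∃ M > (0:ℝ), ∀ T > (0:ℝ), ∀ p : ℝ, 1 ≤ p →
      ∀ (x : ℝ → (Fin n → ℝ)) (hx : Continuous x),
        (∫ t in Set.Ioc (0:ℝ) T, ‖C (seg τ x hx t)‖ ^ p) ^ (1/p) ≤
          M * (((∫ t in Set.Ioc (-τ) (0:ℝ), ‖x t‖ ^ p) +
            ∫ t in Set.Ioc (0:ℝ) T, ‖x t‖ ^ p) ^ (1/p)) := by
  obtain ⟨M, hM, hle⟩ := statement14_general hτ.le C
  exact ⟨M, hM, fun T hT p hp x hx => hle T hT.le p hp ⟨x, hx⟩⟩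

end DelaySeg
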